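/- arXiv:1907.01495 — 2 statements merged into one kernel-verified Lean document; each statement's English description precedes it below -/
import Mathlib

section
/- Let V be a finite set, I a finite index set, A : I → Finset V a family of subsets of V, and σ a permutation of I. If there exists a nonempty subset J₁ ⊆ I with ℓ(I, J₁) ≠ ℓ(I, σ(J₁)), then there exist a subset J₂ ⊆ I and a nonempty subset J₃ ⊆ J₂ such that ℓ(J₂, J₃) ≠ ℓ(σ(J₂), σ(J₃)), and moreover either |J₂| ≤ 2 or for all distinct i, j ∈ J₂ the set A(i) is not a subset of A(j) (i.e., the sets indexed by J₂ form an antichain under inclusion). -/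
/-- The Venn cell cardinality `ℓ(J, J')` of a family `A : I → Finset V`:
the number of elements of `V` lying in every set `A i` for `i ∈ J'` and in
no set `A i` for `i ∈ J \ J'`. -/
def vennCard {V I : Type*} [Fintype V] [DecidableEq V] [DecidableEq I]
    (A : I → Finset V) (J J' : Finset I) : ℕ :=
  ((J'.inf A) \ ((J \ J').sup A)).card

/-- A subset `J` of the index set is *Venn-good* for a permutation `σ` if
`ℓ(J, J') = ℓ(σ(J), σ(J'))` for every nonempty `J' ⊆ J`. -/
def VennGood {V I : Type*} [Fintype V] [DecidableEq V] [DecidableEq I]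
    (A : I → Finset V) (σ : Equiv.Perm I) (J : Finset I) : Prop :=
  ∀ J' ⊆ J, J'.Nonempty →
    vennCard A J J' = vennCard A (J.image σ) (J'.image σ)

/-!
The diagram of `A` on `σ(J)` is the diagram of `B = A ∘ σ` on `J`, so two families are compared on
the same index sets. Take a minimal `J` on which their diagrams differ, and suppose that `|J| > 2`
and `A i ⊆ A j` for some `i ≠ j` in `J`. The diagrams agree on `{i, j}`, so `B i ⊆ B j`, and every
cell whose index set contains `i` but not `j` is empty in both diagrams. Deleting `k ∉ K` from `J`
merges the cells of `K` and `K ∪ {k}`; since the diagrams agree on `J \ {k}`, they agree at `K ≠ ∅`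
exactly when they agree at `K ∪ {k}`. Toggling `i` and `j` carries every nonempty index set to one
that contains `i` but not `j`, through nonempty sets only.
-/

section VennCard

variable {V I : Type*} [Fintype V] [DecidableEq V] [DecidableEq I]

theorem vennCard_image {ι : Type*} [DecidableEq ι] (A : I → Finset V) {f : ι → I}
    (hf : f.Injective) (J K : Finset ι) :
    vennCard A (J.image f) (K.image f) = vennCard (A ∘ f) J K := by
  rw [vennCard, vennCard, ← Finset.image_sdiff _ _ hf, Finset.inf_image, Finset.sup_image]

theorem vennCard_eq_zero_of_subset {A : I → Finset V} {J K : Finset I} {i j : I}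
    (hiK : i ∈ K) (hjJ : j ∈ J) (hjK : j ∉ K) (hA : A i ⊆ A j) : vennCard A J K = 0 := by
  rw [vennCard, Finset.card_eq_zero, Finset.sdiff_eq_empty_iff_subset]
  calc K.inf A ⊆ A i := Finset.inf_le hiK
    _ ⊆ A j := hA
    _ ⊆ (J \ K).sup A := Finset.le_sup (Finset.mem_sdiff.2 ⟨hjJ, hjK⟩)

theorem vennCard_pair_eq_zero_iff_subset (A : I → Finset V) {i j : I} (hij : i ≠ j) :
    vennCard A {i, j} {i} = 0 ↔ A i ⊆ A j := by
  have hsdiff : ({i, j} : Finset I) \ {i} = {j} := by grind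
  rw [vennCard, hsdiff, Finset.inf_singleton, Finset.sup_singleton, Finset.card_eq_zero,
    Finset.sdiff_eq_empty_iff_subset]

theorem vennCard_erase (A : I → Finset V) {J K : Finset I} {k : I} (hkJ : k ∈ J) (hkK : k ∉ K) :
    vennCard A (J.erase k) K = vennCard A J K + vennCard A J (insert k K) := by
  have hsdiff : J \ K = insert k (J.erase k \ K) := by
    rw [← Finset.insert_sdiff_of_notMem _ hkK, Finset.insert_erase hkJ]
  have hsdiff_insert : J \ insert k K = J.erase k \ K := by
    rw [Finset.sdiff_insert, Finset.erase_sdiff_comm]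
  simp only [vennCard, hsdiff_insert]
  rw [hsdiff, Finset.sup_insert, Finset.inf_insert]
  set s := K.inf A
  set t := (J.erase k \ K).sup A
  calc (s \ t).card = ((s \ t) \ A k).card + ((s \ t) ∩ A k).card :=
        (Finset.card_sdiff_add_card_inter _ _).symm
    _ = (s \ (A k ⊔ t)).card + ((A k ⊓ s) \ t).card := by
        congr 2 <;> grind

end VennCard

/-- The families `A` and `B` have the same cardinality Venn diagram on `J`. The cell of the empty
index set is left out, as in `VennGood`, which is the case `B = A ∘ σ`. -/
def SameVenn {V W I : Type*} [Fintype V] [DecidableEq V] [Fintype W] [DecidableEq W]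
    [DecidableEq I] (A : I → Finset V) (B : I → Finset W) (J : Finset I) : Prop :=
  ∀ K ⊆ J, K.Nonempty → vennCard A J K = vennCard B J K

section SameVenn

variable {V W I : Type*} [Fintype V] [DecidableEq V] [Fintype W] [DecidableEq W] [DecidableEq I]
  {A : I → Finset V} {B : I → Finset W}

theorem SameVenn.subset_of_subset {i j : I} (h : SameVenn A B {i, j}) (hA : A i ⊆ A j) :
    B i ⊆ B j := by
  obtain rfl | hij := eq_or_ne i j
  · exact Finset.Subset.rfl
  · rw [← vennCard_pair_eq_zero_iff_subset B hij,
      ← h {i} (Finset.singleton_subset_iff.2 (Finset.mem_insert_self i {j}))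
        (Finset.singleton_nonempty i)]
    exact (vennCard_pair_eq_zero_iff_subset A hij).2 hA

theorem SameVenn.vennCard_eq_iff_insert {J K : Finset I} {k : I} (h : SameVenn A B (J.erase k))
    (hkJ : k ∈ J) (hkK : k ∉ K) (hKJ : K ⊆ J) (hK : K.Nonempty) :
    vennCard A J K = vennCard B J K ↔
      vennCard A J (insert k K) = vennCard B J (insert k K) := by
  have hsum := h K (Finset.subset_erase.2 ⟨hKJ, hkK⟩) hK
  rw [vennCard_erase A hkJ hkK, vennCard_erase B hkJ hkK] at hsum
  lia

theorem sameVenn_of_erase {J : Finset I} {i j : I} (hi : i ∈ J) (hj : j ∈ J) (hij : i ≠ j)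
    (hA : A i ⊆ A j) (hB : B i ⊆ B j) (hJi : SameVenn A B (J.erase i))
    (hJj : SameVenn A B (J.erase j)) : SameVenn A B J := by
  have eq_of_notMem : ∀ K : Finset I, i ∈ K → j ∉ K → vennCard A J K = vennCard B J K := by
    intro K hiK hjK
    rw [vennCard_eq_zero_of_subset hiK hj hjK hA, vennCard_eq_zero_of_subset hiK hj hjK hB]
  have eq_of_mem : ∀ K ⊆ J, i ∈ K → vennCard A J K = vennCard B J K := by
    intro K hKJ hiK
    by_cases hjK : j ∈ K
    · have hiK' : i ∈ K.erase j := Finset.mem_erase.2 ⟨hij, hiK⟩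
      have hjK' : j ∉ K.erase j := Finset.notMem_erase j K
      rw [← Finset.insert_erase hjK, ← hJj.vennCard_eq_iff_insert hj hjK'
        ((Finset.erase_subset j K).trans hKJ) ⟨i, hiK'⟩]
      exact eq_of_notMem _ hiK' hjK'
    · exact eq_of_notMem K hiK hjK
  intro K hKJ hK
  by_cases hiK : i ∈ K
  · exact eq_of_mem K hKJ hiK
  · rw [hJi.vennCard_eq_iff_insert hi hiK hKJ hK]
    exact eq_of_mem _ (Finset.insert_subset hi hKJ) (Finset.mem_insert_self i K)

theorem sameVenn_of_forall_ssubset {J : Finset I} {i j : I} (hi : i ∈ J) (hj : j ∈ J)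
    (hij : i ≠ j) (hA : A i ⊆ A j) (hJ : 2 < J.card) (h : ∀ K ⊂ J, SameVenn A B K) :
    SameVenn A B J := by
  have hpair : {i, j} ⊂ J :=
    (Finset.insert_subset hi (Finset.singleton_subset_iff.2 hj)).ssubset_of_ne
      (by rintro rfl; exact hJ.not_ge Finset.card_le_two)
  exact sameVenn_of_erase hi hj hij hA ((h _ hpair).subset_of_subset hA)
    (h _ (Finset.erase_ssubset hi)) (h _ (Finset.erase_ssubset hj))

theorem venn_failure_antichain_witness_general {J J₁ : Finset I} (hJ₁ : J₁ ⊆ J)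
    (h₁ : J₁.Nonempty) (h₂ : vennCard A J J₁ ≠ vennCard B J J₁) :
    ∃ J₂ ⊆ J, ∃ J₃ ⊆ J₂, J₃.Nonempty ∧ vennCard A J₂ J₃ ≠ vennCard B J₂ J₃ ∧
      (J₂.card ≤ 2 ∨ ∀ i ∈ J₂, ∀ j ∈ J₂, i ≠ j → ¬ A i ⊆ A j) := by
  obtain ⟨J₂, hJ₂, hmin⟩ := exists_minimal_le_of_wellFoundedLT (fun J => ¬ SameVenn A B J) J
    (fun h => h₂ (h J₁ hJ₁ h₁))
  have hfail : ∃ J₃ ⊆ J₂, J₃.Nonempty ∧ vennCard A J₂ J₃ ≠ vennCard B J₂ J₃ := by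
    simpa only [SameVenn, not_forall, exists_prop] using hmin.prop
  obtain ⟨J₃, hJ₃, hne, hcard⟩ := hfail
  refine ⟨J₂, hJ₂, J₃, hJ₃, hne, hcard, or_iff_not_imp_left.2 fun htwo i hi j hj hij hA => ?_⟩
  exact hmin.prop (sameVenn_of_forall_ssubset hi hj hij hA (not_le.1 htwo)
    fun K hK => not_not.1 (hmin.not_prop_of_lt hK))

end SameVenn

/-- If a permutation `σ` of the index set fails to preserve some cell of the
cardinality Venn diagram of the full family, then the failure is witnessed by
a subfamily `J₂` (with witness cell `J₃ ⊆ J₂`) such that `|J₂| ≤ 2` or the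
sets indexed by `J₂` form an antichain under inclusion. -/
theorem venn_failure_antichain_witness {V I : Type*}
    [Fintype V] [DecidableEq V] [Fintype I] [DecidableEq I]
    (A : I → Finset V) (σ : Equiv.Perm I)
    (J₁ : Finset I) (h₁ : J₁.Nonempty)
    (h₂ : vennCard A Finset.univ J₁ ≠ vennCard A Finset.univ (J₁.image σ)) :
    ∃ J₂ J₃ : Finset I, J₃ ⊆ J₂ ∧ J₃.Nonempty ∧
      vennCard A J₂ J₃ ≠ vennCard A (J₂.image σ) (J₃.image σ) ∧
      (J₂.card ≤ 2 ∨ ∀ i ∈ J₂, ∀ j ∈ J₂, i ≠ j → ¬ A i ⊆ A j) := by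
  obtain ⟨J₂, -, J₃, h⟩ := venn_failure_antichain_witness_general (A := A) (B := A ∘ σ)
    J₁.subset_univ h₁ (by rwa [← vennCard_image A σ.injective, Finset.image_univ_equiv])
  exact ⟨J₂, J₃, by rwa [vennCard_image A σ.injective]⟩
end

section
/- Let V be a finite set, I a finite index set, A : I → Finset V a family of subsets of V, and σ a permutation of I. Then there exists a permutation f of V such that f maps A(i) onto A(σ(i)) for every i ∈ I, if and only if ℓ(I, J) = ℓ(I, σ(J)) holds for every nonempty J ⊆ I. -/
/-!
A bijection carries each `A i` onto `B i` exactly when it carries each cell of the Venn diagram of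
`A` onto the corresponding cell of `B`. As the cells partition the ground set, such a bijection can
be assembled from arbitrary bijections between corresponding cells. Take `B = A ∘ σ`, whose
`J`-cell is the `σ(J)`-cell of `A`; the cell of the points outside every `A i` is then mapped to
itself, so only nonempty `J` impose a condition.
-/

open Cardinal

/-- The cell of the Venn diagram of the family `A` indexed by `J`, i.e.
`(⋂ i ∈ J, A i) \ ⋃ i ∉ J, A i`, whose cardinality is `ℓ(I, J)`. It is encoded as the fiber over
`J` of the map sending `v` to the set of all `i` with `v ∈ A i`, so that bijections between
corresponding cells can be glued along the fibers. -/
def vennCell {V I : Type*} (A : I → Set V) (J : Set I) : Set V :=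
  {v | {i | v ∈ A i} = J}

theorem exists_equiv_comp_eq_iff {α β γ : Type*} {f : α → γ} {g : β → γ} :
    (∃ e : α ≃ β, g ∘ e = f) ↔ ∀ c, Nonempty ({a // f a = c} ≃ {b // g b = c}) := by
  constructor
  · rintro ⟨e, rfl⟩ c
    exact ⟨e.subtypeEquiv fun _ => Iff.rfl⟩
  · intro h
    exact ⟨Equiv.ofFiberEquiv fun c => (h c).some, funext (Equiv.ofFiberEquiv_map _)⟩

section Family

variable {V W I : Type*}

theorem mem_vennCell {A : I → Set V} {J : Set I} {v : V} :
    v ∈ vennCell A J ↔ ∀ i, v ∈ A i ↔ i ∈ J :=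
  Set.ext_iff

theorem forall_image_eq_iff_setOf_mem_comp_eq {A : I → Set V} {B : I → Set W} (f : V ≃ W) :
    (∀ i, f '' A i = B i) ↔ (fun w => {i | w ∈ B i}) ∘ f = fun v => {i | v ∈ A i} := by
  calc
    (∀ i, f '' A i = B i) ↔ ∀ i v, v ∈ A i ↔ f v ∈ B i :=
      forall_congr' fun _ => (f.eq_preimage_iff_image_eq _ _).symm.trans Set.ext_iff
    _ ↔ ∀ v i, f v ∈ B i ↔ v ∈ A i :=
      ⟨fun h v i => (h i v).symm, fun h i v => (h v i).symm⟩
    _ ↔ (fun w => {i | w ∈ B i}) ∘ f = fun v => {i | v ∈ A i} := by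
      simp only [funext_iff, Set.ext_iff, Function.comp_apply, Set.mem_ofPred_eq]

theorem exists_equiv_image_eq_iff_vennCell {A : I → Set V} {B : I → Set W} :
    (∃ f : V ≃ W, ∀ i, f '' A i = B i) ↔ ∀ J, Nonempty (vennCell A J ≃ vennCell B J) := by
  simp only [forall_image_eq_iff_setOf_mem_comp_eq]
  exact exists_equiv_comp_eq_iff

theorem vennCell_comp_equiv {I' : Type*} (A : I' → Set V) (σ : I ≃ I') (J : Set I) :
    vennCell (A ∘ σ) J = vennCell A (σ '' J) := by
  ext v
  simp only [mem_vennCell, ← σ.forall_congr_right, σ.injective.mem_set_image, Function.comp_apply]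

end Family

theorem exists_perm_iff_venn_general {V I : Type*} (A : I → Set V) (σ : Equiv.Perm I) :
    (∃ f : Equiv.Perm V, ∀ i, f '' A i = A (σ i)) ↔
      ∀ J : Set I, J.Nonempty → #(vennCell A J) = #(vennCell A (σ '' J)) := by
  simp only [Cardinal.eq, ← vennCell_comp_equiv]
  refine (exists_equiv_image_eq_iff_vennCell (B := A ∘ σ)).trans ⟨fun h J _ => h J, fun h J => ?_⟩
  obtain rfl | hJ := J.eq_empty_or_nonempty
  · rw [vennCell_comp_equiv, Set.image_empty]
    exact ⟨Equiv.refl _⟩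
  · exact h J hJ

theorem mk_vennCell_coe {V I : Type*}
    [Fintype V] [DecidableEq V] [Fintype I] [DecidableEq I]
    (A : I → Finset V) (J : Finset I) :
    #(vennCell (fun i => (A i : Set V)) (J : Set I)) = vennCard A Finset.univ J := by
  have h : vennCell (fun i => (A i : Set V)) (J : Set I) =
      (J.inf A \ (Finset.univ \ J).sup A : Finset V) := by
    ext v
    simp only [mem_vennCell, Finset.coe_sdiff, Set.mem_sdiff, Finset.mem_coe, Finset.mem_inf,
      Finset.mem_sup, Finset.mem_sdiff, Finset.mem_univ]
    grind
  rw [h]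
  exact mk_coe_finset

/-- There is a permutation `f` of the ground set mapping `A i` onto `A (σ i)`
for every `i` iff `σ` preserves all cells of the cardinality Venn diagram. -/
theorem exists_perm_iff_venn {V I : Type*}
    [Fintype V] [DecidableEq V] [Fintype I] [DecidableEq I]
    (A : I → Finset V) (σ : Equiv.Perm I) :
    (∃ f : Equiv.Perm V, ∀ i : I, (A i).image f = A (σ i)) ↔
      ∀ J : Finset I, J.Nonempty →
        vennCard A Finset.univ J = vennCard A Finset.univ (J.image σ) := by
  simpa only [← Fintype.finsetEquivSet.forall_congr_right, Fintype.finsetEquivSet_apply,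
    ← Finset.coe_image, Finset.coe_inj, Finset.coe_nonempty, mk_vennCell_coe, Nat.cast_inj]
    using exists_perm_iff_venn_general (fun i => (A i : Set V)) σ
end
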